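/- Let G be a graphing and H = (J,F) a hyperfinite spanning subforest of G (F Borel, every component of H a tree, H hyperfinite). Then α(X) = (d̄_H/2)·η_H(X∩F) defines a (countably additive) measure on Borel subsets of E with α ≤ ρ and α(E) = ρ(E). -/

import Mathlib

open MeasureTheory

/-- A graphing: a bounded-degree Borel graph `(J, E)` on a standard Borel space together
with a probability measure `μ` satisfying the measure-preservation (intrinsic
mass-transport) equation `∫_A deg_B = ∫_B deg_A`. -/
structure Graphing (J : Type*) [MeasurableSpace J] where
  /-- the (symmetric) adjacency relation -/
  E : J → J → Prop
  symm : ∀ x y, E x y → E y x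
  measE : MeasurableSet {p : J × J | E p.1 p.2}
  /-- the underlying probability measure -/
  μ : Measure J
  prob : IsProbabilityMeasure μ
  /-- the degree bound -/
  D : ℕ
  degFin : ∀ x, {y | E x y}.Finite
  degBound : ∀ x, ({y | E x y}).ncard ≤ D
  mp : ∀ A B : Set J, MeasurableSet A → MeasurableSet B →
    ∫ x in A, (({y ∈ B | E x y}).ncard : ℝ) ∂μ = ∫ x in B, (({y ∈ A | E x y}).ncard : ℝ) ∂μ

namespace Graphing

variable {J : Type*} [MeasurableSpace J]

/-- The edge set of a graphing, as a (symmetric) set of ordered pairs. -/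
def edgeSet (G : Graphing J) : Set (J × J) := {p | G.E p.1 p.2}

/-- A Borel symmetric subset of the edge set of `G`. -/
def IsEdgeSubset (G : Graphing J) (X : Set (J × J)) : Prop :=
  MeasurableSet X ∧ (∀ x y, (x, y) ∈ X → (y, x) ∈ X) ∧ X ⊆ G.edgeSet

/-- The vertex set of the connected component of `x` in the graph with edge set `X`. -/
def compo (X : Set (J × J)) (x : J) : Set J :=
  {y | Relation.ReflTransGen (fun a b => (a, b) ∈ X) x y}

/-- The number of edges of `X` incident with `x`. -/
noncomputable def degX (X : Set (J × J)) (x : J) : ℕ := ({y | (x, y) ∈ X}).ncard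

/-- The average degree `d̄` of a graphing. -/
noncomputable def avgDeg (G : Graphing J) : ℝ := ∫ x, (({y | G.E x y}).ncard : ℝ) ∂G.μ

/-- The edge measure `η` of a graphing: `η(X) = (1/d̄) ∫ deg_X dμ`. -/
noncomputable def eta (G : Graphing J) (X : Set (J × J)) : ℝ :=
  (∫ x, (degX X x : ℝ) ∂G.μ) / G.avgDeg

/-- The normalized rank `ρ(X) = 1 − E_u(1/|V(G^X_u)|)` of a Borel edge set `X`, with the
convention `1/|V| = 0` for infinite components (`Nat.card` of an infinite set is `0`). -/
noncomputable def rho (G : Graphing J) (X : Set (J × J)) : ℝ :=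
  1 - ∫ x, (1 : ℝ) / (Nat.card ↥(compo X x)) ∂G.μ

/-- A graphing is hyperfinite if edge sets of arbitrarily small edge measure can be
removed so that only finite connected components remain. -/
def Hyperfinite (G : Graphing J) : Prop :=
  ∀ ε : ℝ, 0 < ε → ∃ X : Set (J × J), G.IsEdgeSubset X ∧ G.eta X < ε ∧
    ∀ x : J, (compo (G.edgeSet \ X) x).Finite

/-- A set of edges is a forest if for every edge `(a,b)` there is no path from `a` to `b`
avoiding that edge; equivalently, the graph it spans has no cycles. -/
def IsForestSet (X : Set (J × J)) : Prop :=
  ∀ a b : J, (a, b) ∈ X →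
    ¬ Relation.ReflTransGen
        (fun u v => (u, v) ∈ X ∧ ¬((u = a ∧ v = b) ∨ (u = b ∧ v = a))) a b

/-- A graphing is a forest (all components are trees) if its edge set is a forest. -/
def IsForest (G : Graphing J) : Prop := IsForestSet G.edgeSet

end Graphing

/-!
In a forest with finite components, let each edge `(x, y)` pay its endpoint `x` the proportion of
the component that is cut off on the side of `y` when `x` is deleted. The two branches at the ends
of an edge partition the component, so every edge pays `1` in total; the branches at a vertex `x`
partition its component `C` without `x`, so `x` receives `1 - 1 / |C|`. The mass transport
principle then gives `½ ∫ deg_F dμ = ρ(F)`.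

If `F` is hyperfinite, remove edge sets `Zₙ` of summable measure leaving finite components. By the
Borel–Cantelli lemma and the quasi-invariance of `μ`, almost every component of `F` meets each of
its edges in only finitely many `Zₙ`, so its finite pieces exhaust it and the identity passes to
the limit. It then applies to `X ∩ F` for every Borel edge set `X`, and `ρ` is monotone.
-/

open Filter
open scoped ENNReal Topology ProbabilityTheory

theorem natCast_le_encard_iUnion_iff {α : Type*} {s : ℕ → Set α} (hs : Monotone s) (k : ℕ) :
    (k : ℕ∞) ≤ (⋃ n, s n).encard ↔ ∃ n, (k : ℕ∞) ≤ (s n).encard := by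
  refine ⟨fun hk => ?_, fun ⟨n, hn⟩ => hn.trans (Set.encard_le_encard (Set.subset_iUnion s n))⟩
  obtain ⟨t, hts, htk⟩ := Set.exists_subset_encard_eq hk
  lift t to Finset α using Set.finite_of_encard_eq_coe htk
  obtain ⟨n, hn⟩ := hs.directed_le.exists_mem_subset_of_finset_subset_biUnion hts
  exact ⟨n, htk ▸ Set.encard_le_encard hn⟩

theorem toReal_toENNReal_encard {α : Type*} (s : Set α) :
    (s.encard : ENNReal).toReal = s.ncard := by
  rw [Set.ncard]
  cases s.encard <;> simp

theorem tendsto_encard_of_eventually_mem {ι α : Type*} {l : Filter ι} {s : ι → Set α} {t : Set α}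
    (hst : ∀ i, s i ⊆ t) (hmem : ∀ x ∈ t, ∀ᶠ i in l, x ∈ s i) :
    Tendsto (fun i => (s i).encard) l (𝓝 t.encard) := by
  refine tendsto_order.2 ⟨fun a ha => ?_, fun a ha => .of_forall fun i =>
    (Set.encard_le_encard (hst i)).trans_lt ha⟩
  lift a to ℕ using ha.ne_top
  obtain ⟨u, hut, hu⟩ := Set.exists_subset_encard_eq
    ((ENat.add_one_le_iff (ENat.natCast_ne_top a)).2 ha)
  have hufin : u.Finite := Set.finite_of_encard_eq_coe (k := a + 1) hu
  filter_upwards [(eventually_all_finite hufin).2 fun x hx => hmem x (hut hx)] with i hi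
  calc (a : ℕ∞) < a + 1 := ENat.lt_add_one_iff (ENat.natCast_ne_top a) |>.2 le_rfl
    _ = u.encard := hu.symm
    _ ≤ (s i).encard := Set.encard_le_encard hi

theorem measurable_of_measurableSet_natCast_le {α : Type*} [MeasurableSpace α] {f : α → ℕ∞}
    (hf : ∀ k : ℕ, MeasurableSet {x | (k : ℕ∞) ≤ f x}) : Measurable f := by
  refine measurable_to_countable' fun c => ?_
  induction c using ENat.recTopCoe with
  | top =>
    convert! MeasurableSet.iInter hf using 1
    ext x
    rw [Set.mem_preimage, Set.mem_singleton_iff, ENat.eq_top_iff_forall_ge, Set.mem_iInter]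
    rfl
  | coe n =>
    convert! (hf n).diff (hf (n + 1)) using 1
    ext x
    rw [Set.mem_preimage, Set.mem_singleton_iff, Set.mem_sdiff, Set.mem_ofPred_eq,
      Set.mem_ofPred_eq, Nat.cast_add_one, ENat.add_one_le_iff (ENat.natCast_ne_top n), not_lt,
      and_comm, ← le_antisymm_iff]

theorem tendsto_measure_sdiff_of_tsum_ne_top {α : Type*} [MeasurableSpace α] {μ : Measure α}
    [IsFiniteMeasure μ] {s : Set α} {t : ℕ → Set α} (ht : ∀ n, MeasurableSet (t n))
    (hts : ∀ n, t n ⊆ s) (hsum : ∑' n, μ (t n) ≠ ⊤) :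
    Tendsto (fun n => μ (s \ t n)) atTop (𝓝 (μ s)) := by
  simp_rw [measure_sdiff (hts _) (ht _).nullMeasurableSet (measure_ne_top _ _)]
  simpa using ENNReal.Tendsto.sub tendsto_const_nhds
    (ENNReal.tendsto_atTop_zero_of_tsum_ne_top hsum) (.inl (measure_ne_top μ s))

/-! ### Relations with bounded sections -/

section IncreasingTuples

variable {α β : Type*} [MeasurableSpace β] [StandardBorelSpace β]

/-- The pairs of a point `x` and an enumeration of `k` distinct points of the section of `R` at
`x`. Listing the points in the order of an embedding into `ℝ` makes the enumeration determined by
its range. -/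
def increasingTuples (R : Set (α × β)) (k : ℕ) : Set (α × (Fin k → β)) :=
  {p | StrictMono (embeddingReal β ∘ p.2) ∧ ∀ i, (p.1, p.2 i) ∈ R}

theorem encard_range_of_mem_increasingTuples {R : Set (α × β)} {k : ℕ} {p : α × (Fin k → β)}
    (hp : p ∈ increasingTuples R k) : (Set.range p.2).encard = k := by
  rw [← Set.image_univ, (hp.1.injective.of_comp).encard_image]
  simp

theorem fst_image_increasingTuples (R : Set (α × β)) (k : ℕ) :
    Prod.fst '' increasingTuples R k = {x | (k : ℕ∞) ≤ (Prod.mk x ⁻¹' R).encard} := by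
  have he := (measurableEmbedding_embeddingReal β).injective
  ext x
  constructor
  · rintro ⟨p, hp, rfl⟩
    rw [Set.mem_ofPred_eq, ← encard_range_of_mem_increasingTuples hp]
    exact Set.encard_le_encard (Set.range_subset_iff.2 hp.2)
  · intro hx
    obtain ⟨t, htR, htk⟩ := Set.exists_subset_encard_eq hx
    have htfin : (embeddingReal β '' t).Finite := (Set.finite_of_encard_eq_coe htk).image _
    have hcard : htfin.toFinset.card = k := by
      rw [← ENat.natCast_inj, ← Set.encard_coe_eq_coe_finsetCard, Set.Finite.coe_toFinset,
        he.encard_image, htk]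
    have hmem (i : Fin k) : ∃ y ∈ t, embeddingReal β y = htfin.toFinset.orderEmbOfFin hcard i :=
      htfin.mem_toFinset.1 (htfin.toFinset.orderEmbOfFin_mem hcard i)
    choose v hvt hv using hmem
    refine ⟨(x, v), ⟨?_, fun i => htR (hvt i)⟩, rfl⟩
    rw [show embeddingReal β ∘ v = htfin.toFinset.orderEmbOfFin hcard from funext hv]
    exact (htfin.toFinset.orderEmbOfFin hcard).strictMono

theorem injOn_fst_increasingTuples (R : Set (α × β)) (k : ℕ) :
    Set.InjOn Prod.fst
      (increasingTuples R k ∩ Prod.fst ⁻¹' {x | (Prod.mk x ⁻¹' R).encard ≤ k}) := by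
  have range_eq {p : α × (Fin k → β)} (hp : p ∈ increasingTuples R k)
      (hk : (Prod.mk p.1 ⁻¹' R).encard ≤ k) : Set.range p.2 = Prod.mk p.1 ⁻¹' R :=
    (Set.finite_range _).eq_of_subset_of_encard_le (Set.range_subset_iff.2 hp.2)
      (hk.trans_eq (encard_range_of_mem_increasingTuples hp).symm)
  rintro ⟨x, v⟩ ⟨hv, hvk⟩ ⟨_, w⟩ ⟨hw, hwk⟩ rfl
  have hrange : Set.range (embeddingReal β ∘ v) = Set.range (embeddingReal β ∘ w) := by
    rw [Set.range_comp, Set.range_comp, range_eq hv hvk, range_eq hw hwk]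
  exact congrArg (Prod.mk x) ((measurableEmbedding_embeddingReal β).injective.comp_left
    ((hv.1.range_inj hw.1).1 hrange))

variable [MeasurableSpace α] {R : Set (α × β)}

theorem measurableSet_increasingTuples (hR : MeasurableSet R) (k : ℕ) :
    MeasurableSet (increasingTuples R k) := by
  have he (i : Fin k) : Measurable fun p : α × (Fin k → β) => embeddingReal β (p.2 i) :=
    (measurableEmbedding_embeddingReal β).measurable.comp (by fun_prop)
  have hmono : MeasurableSet {p : α × (Fin k → β) | StrictMono (embeddingReal β ∘ p.2)} := by
    simp only [StrictMono, Set.ofPred_forall]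
    exact .iInter fun i => .iInter fun j => .iInter fun _ =>
      measurableSet_lt (he i) (he j)
  have hmem : MeasurableSet {p : α × (Fin k → β) | ∀ i, (p.1, p.2 i) ∈ R} := by
    rw [Set.ofPred_forall]
    exact .iInter fun i => (show Measurable fun p : α × (Fin k → β) => (p.1, p.2 i) by
      fun_prop) hR
  exact hmono.inter hmem

theorem measurableSet_le_encard_section_of_succ [StandardBorelSpace α] (hR : MeasurableSet R)
    {k : ℕ} (hk : MeasurableSet {x | ((k + 1 : ℕ) : ℕ∞) ≤ (Prod.mk x ⁻¹' R).encard}) :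
    MeasurableSet {x | (k : ℕ∞) ≤ (Prod.mk x ⁻¹' R).encard} := by
  have hle : {x | (Prod.mk x ⁻¹' R).encard ≤ k} =
      {x | ((k + 1 : ℕ) : ℕ∞) ≤ (Prod.mk x ⁻¹' R).encard}ᶜ := by
    ext x
    rw [Set.mem_compl_iff, Set.mem_ofPred_eq, Set.mem_ofPred_eq, Nat.cast_add_one,
      ENat.add_one_le_iff (ENat.natCast_ne_top k), not_lt]
  have hexact : MeasurableSet (Prod.fst ''
      (increasingTuples R k ∩ Prod.fst ⁻¹' {x | (Prod.mk x ⁻¹' R).encard ≤ k})) :=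
    ((measurableSet_increasingTuples hR k).inter (measurable_fst (hle ▸ hk.compl)))
      |>.image_of_measurable_injOn measurable_fst (injOn_fst_increasingTuples R k)
  rw [Set.image_inter_preimage, fst_image_increasingTuples] at hexact
  convert! hexact.union hk using 1
  ext x
  have : (k : ℕ∞) ≤ (k + 1 : ℕ) := Nat.cast_le.2 k.le_succ
  grind

end IncreasingTuples

/-- A Borel relation each of whose sections has at most `n` points, such as the adjacency relation
of a Borel graph with degrees at most `n`. -/
structure HasBoundedSections {α β : Type*} [MeasurableSpace α] [MeasurableSpace β] (n : ℕ)
    (R : Set (α × β)) : Prop where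
  measurableSet : MeasurableSet R
  encard_section_le : ∀ x, (Prod.mk x ⁻¹' R).encard ≤ n

namespace HasBoundedSections

variable {α β γ : Type*} [MeasurableSpace α] [MeasurableSpace β] [MeasurableSpace γ] {m n : ℕ}
  {R S : Set (α × β)} {T : Set (β × γ)}

theorem diagonal [StandardBorelSpace α] : HasBoundedSections 1 (Set.diagonal α) where
  measurableSet := measurableSet_diagonal
  encard_section_le x := by
    have : Prod.mk x ⁻¹' Set.diagonal α = {x} := by ext; simp [eq_comm]
    simp [this]

theorem mono (hR : HasBoundedSections n R) (hS : MeasurableSet S) (hSR : S ⊆ R) :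
    HasBoundedSections n S :=
  ⟨hS, fun x => (Set.encard_le_encard (Set.preimage_mono hSR)).trans (hR.encard_section_le x)⟩

theorem union (hR : HasBoundedSections m R) (hS : HasBoundedSections n S) :
    HasBoundedSections (m + n) (R ∪ S) where
  measurableSet := hR.measurableSet.union hS.measurableSet
  encard_section_le x := by
    rw [Set.preimage_union, Nat.cast_add]
    exact (Set.encard_union_le _ _).trans
      (add_le_add (hR.encard_section_le x) (hS.encard_section_le x))

theorem finite_section (hR : HasBoundedSections n R) (x : α) : (Prod.mk x ⁻¹' R).Finite :=
  Set.finite_of_encard_le_coe (hR.encard_section_le x)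

/- Downward induction on `k`: off the set where the section has more than `k` points, an increasing
`k`-tuple is determined by its base point, so the projection to the base point is injective. -/
theorem measurableSet_le_encard_section [StandardBorelSpace α] [StandardBorelSpace β]
    (hR : HasBoundedSections n R) (k : ℕ) :
    MeasurableSet {x | (k : ℕ∞) ≤ (Prod.mk x ⁻¹' R).encard} := by
  have hlarge {k : ℕ} (hk : n < k) : MeasurableSet {x | (k : ℕ∞) ≤ (Prod.mk x ⁻¹' R).encard} := by
    convert! MeasurableSet.empty
    ext x
    simpa using (hR.encard_section_le x).trans_lt (Nat.cast_lt.2 hk)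
  rcases le_or_gt k n with hk | hk
  · exact Nat.decreasingInduction'
      (P := fun k => MeasurableSet {x | (k : ℕ∞) ≤ (Prod.mk x ⁻¹' R).encard})
      (fun j _ _ => measurableSet_le_encard_section_of_succ hR.measurableSet)
      (hk.trans n.le_succ) (hlarge n.lt_succ_self)
  · exact hlarge hk

theorem measurable_encard_section [StandardBorelSpace α] [StandardBorelSpace β]
    (hR : HasBoundedSections n R) : Measurable fun x => (Prod.mk x ⁻¹' R).encard :=
  measurable_of_measurableSet_natCast_le hR.measurableSet_le_encard_section

theorem comp [StandardBorelSpace α] [StandardBorelSpace β] [StandardBorelSpace γ]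
    (hR : HasBoundedSections m R) (hT : HasBoundedSections n T) :
    HasBoundedSections (m * n) (SetRel.comp R T) where
  measurableSet := by
    have hmid : HasBoundedSections m
        {p : (α × γ) × β | (p.1.1, p.2) ∈ R ∧ (p.2, p.1.2) ∈ T} := by
      refine ⟨.inter ((by fun_prop : Measurable fun p : (α × γ) × β => (p.1.1, p.2))
        hR.measurableSet) ((by fun_prop : Measurable fun p : (α × γ) × β => (p.2, p.1.2))
        hT.measurableSet), fun p => ?_⟩
      exact (Set.encard_le_encard fun b hb => hb.1).trans (hR.encard_section_le p.1)
    convert! hmid.measurableSet_le_encard_section 1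
    ext p
    rw [Set.mem_ofPred_eq, Nat.cast_one, Set.one_le_encard_iff_nonempty]
    rfl
  encard_section_le x := by
    have hsection : Prod.mk x ⁻¹' SetRel.comp R T =
        ⋃ y ∈ (hR.finite_section x).toFinset, Prod.mk y ⁻¹' T := by
      ext z; simp [SetRel.mem_comp]
    rw [hsection]
    calc _ ≤ ∑ y ∈ (hR.finite_section x).toFinset, (Prod.mk y ⁻¹' T).encard :=
          Finset.set_encard_biUnion_le _ _
      _ ≤ (hR.finite_section x).toFinset.card • (n : ℕ∞) :=
          Finset.sum_le_card_nsmul _ _ _ fun y _ => hT.encard_section_le y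
      _ ≤ (m * n : ℕ) := by
          have := hR.encard_section_le x
          rw [(hR.finite_section x).encard_eq_coe_toFinset_card] at this
          rw [nsmul_eq_mul, Nat.cast_mul]
          gcongr

/-- The kernel sending `x` to the counting measure on the section of `R` at `x`. -/
noncomputable def kernel [StandardBorelSpace α] [StandardBorelSpace β]
    (hR : HasBoundedSections n R) : ProbabilityTheory.Kernel α β where
  toFun x := Measure.count.restrict (Prod.mk x ⁻¹' R)
  measurable' := by
    refine Measure.measurable_of_measurable_coe _ fun B hB => ?_
    have hRB := hR.mono (hR.measurableSet.inter (measurable_snd hB)) Set.inter_subset_left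
    convert! (Measurable.of_discrete (f := ENat.toENNReal)).comp hRB.measurable_encard_section
      using 2 with x
    rw [Measure.restrict_apply hB, Measure.count_apply
      (hB.inter (measurable_prodMk_left hR.measurableSet)), Set.inter_comm]
    rfl

theorem kernel_apply [StandardBorelSpace α] [StandardBorelSpace β]
    (hR : HasBoundedSections n R) (x : α) :
    hR.kernel x = Measure.count.restrict (Prod.mk x ⁻¹' R) := rfl

instance [StandardBorelSpace α] [StandardBorelSpace β] (hR : HasBoundedSections n R) :
    ProbabilityTheory.IsFiniteKernel hR.kernel where
  exists_univ_le := by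
    refine ⟨n, ENNReal.natCast_lt_top n, fun x => ?_⟩
    rw [kernel_apply, Measure.restrict_apply_univ,
      Measure.count_apply (measurable_prodMk_left hR.measurableSet)]
    exact_mod_cast ENat.toENNReal_le.2 (hR.encard_section_le x)

end HasBoundedSections

namespace Graphing

section Reach

variable {V : Type*}

/-- The pairs of vertices joined by a path with at most `n` edges, all in `Y`. -/
def reach (Y : Set (V × V)) : ℕ → Set (V × V)
  | 0 => Set.diagonal V
  | n + 1 => reach Y n ∪ SetRel.comp (reach Y n) Y

theorem reach_monotone (Y : Set (V × V)) : Monotone (reach Y) :=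
  monotone_nat_of_le_succ fun _ => Set.subset_union_left

theorem compo_eq_iUnion_reach (Y : Set (V × V)) (x : V) :
    compo Y x = ⋃ n, Prod.mk x ⁻¹' reach Y n := by
  ext y
  rw [Set.mem_iUnion]
  constructor
  · intro hy
    induction hy with
    | refl => exact ⟨0, rfl⟩
    | tail _ hbc ih =>
      obtain ⟨n, hn⟩ := ih
      exact ⟨n + 1, .inr ⟨_, hn, hbc⟩⟩
  · rintro ⟨n, hn⟩
    induction n generalizing y with
    | zero => exact (show x = y from hn) ▸ .refl
    | succ n ih =>
      rcases hn with hn | ⟨z, hz, hzy⟩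
      · exact ih y hn
      · exact (ih z hz).tail hzy

variable [MeasurableSpace V] [StandardBorelSpace V] {Y : Set (V × V)} {d : ℕ}

theorem exists_hasBoundedSections_reach (hY : HasBoundedSections d Y) (n : ℕ) :
    ∃ m, HasBoundedSections m (reach Y n) := by
  induction n with
  | zero => exact ⟨1, .diagonal⟩
  | succ n ih =>
    obtain ⟨m, hm⟩ := ih
    exact ⟨m + m * d, hm.union (hm.comp hY)⟩

theorem measurable_encard_compo (hY : HasBoundedSections d Y) :
    Measurable fun x => (compo Y x).encard := by
  refine measurable_of_measurableSet_natCast_le fun k => ?_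
  have hreach (x : V) : Monotone fun n => Prod.mk x ⁻¹' reach Y n :=
    fun _ _ h => Set.preimage_mono (reach_monotone Y h)
  simp only [compo_eq_iUnion_reach, natCast_le_encard_iUnion_iff (hreach _), Set.ofPred_exists]
  refine .iUnion fun n => ?_
  obtain ⟨m, hm⟩ := exists_hasBoundedSections_reach hY n
  exact hm.measurableSet_le_encard_section k

end Reach

end Graphing

/-! ### Branches of forests -/

namespace Graphing

section Components

variable {V : Type*} {X Y : Set (V × V)} {x y : V}

theorem mem_compo_self (X : Set (V × V)) (x : V) : x ∈ compo X x := .refl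

theorem compo_mono (hXY : X ⊆ Y) (x : V) : compo X x ⊆ compo Y x :=
  Relation.ReflTransGen.mono (fun _ _ h => hXY h) x

theorem mem_compo_symm (hX : ∀ x y, (x, y) ∈ X → (y, x) ∈ X) (hy : y ∈ compo X x) :
    x ∈ compo X y :=
  have : Std.Symm fun a b => (a, b) ∈ X := ⟨hX⟩
  Std.Symm.symm (r := Relation.ReflTransGen fun a b => (a, b) ∈ X) x y hy

theorem compo_eq_of_mem (hX : ∀ x y, (x, y) ∈ X → (y, x) ∈ X) (hy : y ∈ compo X x) :
    compo X y = compo X x :=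
  Set.Subset.antisymm (fun _ hz => hy.trans hz) fun _ hz => (mem_compo_symm hX hy).trans hz

end Components

section Branches

variable {V : Type*} {X : Set (V × V)} {x y z : V}

/-- The vertices that can be reached from `y` without visiting `x`. In a forest, where `y` is a
neighbour of `x`, this is the branch at `x` through `y`. -/
def branch (X : Set (V × V)) (x y : V) : Set V := compo (X ∩ {x}ᶜ ×ˢ {x}ᶜ) y

theorem branch_subset_compo (X : Set (V × V)) (x y : V) : branch X x y ⊆ compo X y :=
  compo_mono Set.inter_subset_left y

theorem notMem_branch (hyx : y ≠ x) : x ∉ branch X x y := by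
  intro hx
  rcases hx.cases_tail with h | ⟨z, -, hz⟩
  · exact hyx h.symm
  · exact hz.2.2 rfl

theorem mem_branch_of_edge (hyx : y ≠ x) (hz : z ∈ branch X x y) {w : V} (hzw : (z, w) ∈ X)
    (hwx : w ≠ x) : w ∈ branch X x y := by
  refine hz.tail ⟨hzw, fun hzx => ?_, hwx⟩
  exact notMem_branch hyx ((show z = x from hzx) ▸ hz)

theorem compo_eq_insert_iUnion_branch (hX : ∀ y, (x, y) ∈ X → y ≠ x) :
    compo X x = insert x (⋃ y ∈ Prod.mk x ⁻¹' X, branch X x y) := by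
  refine Set.Subset.antisymm (fun z hz => ?_) (Set.insert_subset .refl ?_)
  · induction hz with
    | refl => exact .inl rfl
    | @tail b c _ hbc ih =>
      by_cases hcx : c = x
      · exact .inl hcx
      refine .inr (Set.mem_iUnion₂.2 ?_)
      rcases ih with rfl | hb
      · exact ⟨c, hbc, .refl⟩
      · obtain ⟨y, hxy, hby⟩ := Set.mem_iUnion₂.1 hb
        exact ⟨y, hxy, mem_branch_of_edge (hX y hxy) hby hbc hcx⟩
  · exact Set.iUnion₂_subset fun y hxy z hz => .head hxy (branch_subset_compo X x y hz)

theorem compo_eq_branch_union_branch (hX : ∀ x y, (x, y) ∈ X → (y, x) ∈ X) (hxy : (x, y) ∈ X)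
    (hne : y ≠ x) : compo X x = branch X x y ∪ branch X y x := by
  refine Set.Subset.antisymm (fun z hz => ?_) (Set.union_subset ?_ (branch_subset_compo X y x))
  · induction hz with
    | refl => exact .inr .refl
    | @tail b c _ hbc ih =>
      by_cases hcx : c = x
      · exact .inr (hcx ▸ .refl)
      by_cases hcy : c = y
      · exact .inl (hcy ▸ .refl)
      exact ih.imp (mem_branch_of_edge hne · hbc hcx) (mem_branch_of_edge hne.symm · hbc hcy)
  · rw [← compo_eq_of_mem hX (.single hxy)]
    exact branch_subset_compo X x y

end Branches

namespace IsForestSet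

variable {V : Type*} {X Y : Set (V × V)} {x y : V}

theorem notMem_compo_sdiff (hX : IsForestSet X) (hxy : (x, y) ∈ X) :
    y ∉ compo (X \ {(x, y), (y, x)}) x := fun h => by
  refine hX x y hxy (Relation.ReflTransGen.mono (fun a b hab => ⟨hab.1, ?_⟩) _ _ h)
  simpa using hab.2

theorem mono (hY : IsForestSet Y) (hXY : X ⊆ Y) : IsForestSet X := fun a b hab hpath =>
  hY a b (hXY hab) (Relation.ReflTransGen.mono (fun _ _ h => ⟨hXY h.1, h.2⟩) _ _ hpath)

theorem ne_of_mem (hX : IsForestSet X) (hxy : (x, y) ∈ X) : y ≠ x := by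
  rintro rfl
  exact hX.notMem_compo_sdiff hxy (mem_compo_self _ y)

theorem disjoint_branch_swap (hX : IsForestSet X) (hsymm : ∀ x y, (x, y) ∈ X → (y, x) ∈ X)
    (hxy : (x, y) ∈ X) : Disjoint (branch X x y) (branch X y x) := by
  refine Set.disjoint_left.2 fun z hzy hzx => hX.notMem_compo_sdiff hxy ?_
  have hyz : y ∈ compo (X ∩ {x}ᶜ ×ˢ {x}ᶜ) z :=
    mem_compo_symm (fun a b h => ⟨hsymm a b h.1, h.2.symm⟩) hzy
  exact (compo_mono (by grind) x hzx).trans (compo_mono (by grind) z hyz)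

theorem pairwiseDisjoint_branch (hX : IsForestSet X) (hsymm : ∀ x y, (x, y) ∈ X → (y, x) ∈ X)
    (x : V) : (Prod.mk x ⁻¹' X).PairwiseDisjoint (branch X x) := by
  intro y hy y' hy' hne
  refine Set.disjoint_left.2 fun z hz hz' => hX.notMem_compo_sdiff hy (.head (b := y') ?_ ?_)
  · have := hX.ne_of_mem hy
    grind
  · have hyz : y ∈ compo (X ∩ {x}ᶜ ×ˢ {x}ᶜ) z :=
      mem_compo_symm (fun a b h => ⟨hsymm a b h.1, h.2.symm⟩) hz
    exact compo_mono (by grind) y' (hz'.trans hyz)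

theorem encard_branch_add_encard_branch (hX : IsForestSet X)
    (hsymm : ∀ x y, (x, y) ∈ X → (y, x) ∈ X) (hxy : (x, y) ∈ X) :
    (branch X x y).encard + (branch X y x).encard = (compo X x).encard := by
  rw [compo_eq_branch_union_branch hsymm hxy (hX.ne_of_mem hxy),
    Set.encard_union_eq (hX.disjoint_branch_swap hsymm hxy)]

theorem sum_encard_branch_add_one (hX : IsForestSet X)
    (hsymm : ∀ x y, (x, y) ∈ X → (y, x) ∈ X) (hfin : (Prod.mk x ⁻¹' X).Finite) :
    ∑ y ∈ hfin.toFinset, (branch X x y).encard + 1 = (compo X x).encard := by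
  have hx : x ∉ ⋃ y ∈ Prod.mk x ⁻¹' X, branch X x y := by
    simp only [Set.mem_iUnion, not_exists]
    exact fun y hy => notMem_branch (hX.ne_of_mem hy)
  rw [compo_eq_insert_iUnion_branch fun y hy => hX.ne_of_mem hy, Set.encard_insert_of_notMem hx,
    hfin.encard_biUnion (hX.pairwiseDisjoint_branch hsymm x),
    finsum_mem_eq_finite_toFinset_sum _ hfin]

end IsForestSet

section BranchGraph

variable {V : Type*} {X : Set (V × V)} {d : ℕ}

/-- The graph on `V × V` whose edges fix the first coordinate `x` and move the second one along an
edge of `X` avoiding `x`. It carries all the branches of `X` at once: the component of `(x, y)` is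
a copy of the branch at `x` through `y`. -/
def branchGraph (X : Set (V × V)) : Set ((V × V) × (V × V)) :=
  {q | q.1.1 = q.2.1 ∧ (q.1.2, q.2.2) ∈ X ∩ {q.1.1}ᶜ ×ˢ {q.1.1}ᶜ}

theorem compo_branchGraph (X : Set (V × V)) (x y : V) :
    compo (branchGraph X) (x, y) = Prod.mk x '' branch X x y := by
  refine Set.Subset.antisymm (fun q hq => ?_) (Set.image_subset_iff.2 fun z hz => ?_)
  · induction hq with
    | refl => exact ⟨y, .refl, rfl⟩
    | @tail _ r _ hqr ih =>
      obtain ⟨z, hz, rfl⟩ := ih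
      exact ⟨r.2, hz.tail hqr.2, Prod.ext hqr.1 rfl⟩
  · exact hz.lift (Prod.mk x) fun a b hab => ⟨rfl, hab⟩

variable [MeasurableSpace V] [StandardBorelSpace V]

theorem measurableSet_branchGraph (hX : MeasurableSet X) : MeasurableSet (branchGraph X) := by
  have hedge : Measurable fun q : (V × V) × (V × V) => (q.1.2, q.2.2) := by fun_prop
  have heq {f g : (V × V) × (V × V) → V} (hf : Measurable f) (hg : Measurable g) :
      MeasurableSet {q | f q = g q} := measurableSet_eq_fun hf hg
  exact (heq (by fun_prop) (by fun_prop)).inter <| (hedge hX).inter <|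
    (heq (f := fun q => q.1.2) (g := fun q => q.1.1) (by fun_prop) (by fun_prop)).compl.inter
      (heq (f := fun q => q.2.2) (g := fun q => q.1.1) (by fun_prop) (by fun_prop)).compl

theorem hasBoundedSections_branchGraph (hX : HasBoundedSections d X) :
    HasBoundedSections d (branchGraph X) where
  measurableSet := measurableSet_branchGraph hX.measurableSet
  encard_section_le p := by
    have hsub : Prod.mk p ⁻¹' branchGraph X ⊆ Prod.mk p.1 '' (Prod.mk p.2 ⁻¹' X) :=
      fun q hq => ⟨q.2, hq.2.1, Prod.ext hq.1 rfl⟩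
    exact ((Set.encard_le_encard hsub).trans (Set.encard_image_le _ _)).trans
      (hX.encard_section_le p.2)

theorem measurable_encard_branch (hX : HasBoundedSections d X) :
    Measurable fun p : V × V => (branch X p.1 p.2).encard := by
  convert! measurable_encard_compo (hasBoundedSections_branchGraph hX) using 2 with p
  rw [compo_branchGraph, (Prod.mk_right_injective p.1).encard_image]

end BranchGraph

end Graphing

/-! ### The degree measure and mass transport -/

namespace Graphing

variable {J : Type*} [MeasurableSpace J] (G : Graphing J)

instance : IsProbabilityMeasure G.μ := G.prob

theorem measurableSet_edgeSet : MeasurableSet G.edgeSet := G.measE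

theorem hasBoundedSections_edgeSet : HasBoundedSections G.D G.edgeSet where
  measurableSet := G.measurableSet_edgeSet
  encard_section_le x := by
    refine ((G.degFin x).cast_ncard_eq).symm.trans_le ?_
    exact_mod_cast G.degBound x

theorem eta_nonneg (X : Set (J × J)) : 0 ≤ G.eta X :=
  div_nonneg (integral_nonneg fun _ => Nat.cast_nonneg _)
    (integral_nonneg fun _ => Nat.cast_nonneg _)

namespace IsEdgeSubset

variable {G} {X Y : Set (J × J)}

theorem inter (hX : G.IsEdgeSubset X) (hY : G.IsEdgeSubset Y) :
    G.IsEdgeSubset (X ∩ Y) :=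
  ⟨hX.1.inter hY.1, fun x y h => ⟨hX.2.1 x y h.1, hY.2.1 x y h.2⟩,
    Set.inter_subset_left.trans hX.2.2⟩

theorem sdiff (hX : G.IsEdgeSubset X) (hY : G.IsEdgeSubset Y) :
    G.IsEdgeSubset (X \ Y) :=
  ⟨hX.1.diff hY.1, fun x y h => ⟨hX.2.1 x y h.1, fun h' => h.2 (hY.2.1 y x h')⟩,
    Set.sdiff_subset.trans hX.2.2⟩

theorem hasBoundedSections (hX : G.IsEdgeSubset X) : HasBoundedSections G.D X :=
  G.hasBoundedSections_edgeSet.mono hX.1 hX.2.2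

end IsEdgeSubset

variable [StandardBorelSpace J]

/-- The unnormalized edge measure `∫ deg_X dμ` of a graphing, as a measure on ordered pairs of
vertices supported on the edges. -/
noncomputable def degMeasure : Measure (J × J) :=
  G.μ ⊗ₘ G.hasBoundedSections_edgeSet.kernel

instance : IsFiniteMeasure G.degMeasure := by
  unfold degMeasure
  infer_instance

variable {X : Set (J × J)}

theorem setLIntegral_degMeasure (hX : MeasurableSet X) {f : J × J → ℝ≥0∞} (hf : Measurable f) :
    ∫⁻ p in X, f p ∂G.degMeasure =
      ∫⁻ x, ∫⁻ y in Prod.mk x ⁻¹' (X ∩ G.edgeSet), f (x, y) ∂Measure.count ∂G.μ := by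
  rw [← lintegral_indicator hX, degMeasure, Measure.lintegral_compProd (hf.indicator hX)]
  refine lintegral_congr fun x => ?_
  rw [HasBoundedSections.kernel_apply, Set.preimage_inter,
    ← setLIntegral_indicator (measurable_prodMk_left hX)]
  rfl

theorem degMeasure_apply (hX : MeasurableSet X) :
    G.degMeasure X = ∫⁻ x, (Prod.mk x ⁻¹' (X ∩ G.edgeSet)).encard ∂G.μ := by
  rw [← setLIntegral_one, G.setLIntegral_degMeasure hX measurable_const]
  refine lintegral_congr fun x => ?_
  rw [setLIntegral_one,
    Measure.count_apply (measurable_prodMk_left (hX.inter G.measurableSet_edgeSet))]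

theorem integral_degX_inter_edgeSet (hX : MeasurableSet X) :
    ∫ x, (degX (X ∩ G.edgeSet) x : ℝ) ∂G.μ = G.degMeasure.real X := by
  have hb := G.hasBoundedSections_edgeSet.mono (hX.inter G.measurableSet_edgeSet)
    Set.inter_subset_right
  have hmeas : Measurable fun x => ((Prod.mk x ⁻¹' (X ∩ G.edgeSet)).encard : ℝ≥0∞) :=
    Measurable.of_discrete.comp hb.measurable_encard_section
  rw [Measure.real, G.degMeasure_apply hX, ← integral_toReal hmeas.aemeasurable]
  · simp_rw [toReal_toENNReal_encard]
    rfl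
  · exact .of_forall fun x =>
      ENat.toENNReal_lt_top.2 (Set.encard_lt_top_iff.2 (hb.finite_section x))

theorem integral_degX (hX : MeasurableSet X) (hXG : X ⊆ G.edgeSet) :
    ∫ x, (degX X x : ℝ) ∂G.μ = G.degMeasure.real X := by
  rw [← G.integral_degX_inter_edgeSet hX, Set.inter_eq_left.2 hXG]

theorem avgDeg_eq_degMeasure_real : G.avgDeg = G.degMeasure.real G.edgeSet :=
  G.integral_degX G.measurableSet_edgeSet subset_rfl

theorem degMeasure_real_prod {A B : Set J} (hA : MeasurableSet A) (hB : MeasurableSet B) :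
    G.degMeasure.real (A ×ˢ B) = ∫ x in A, (({y ∈ B | G.E x y}).ncard : ℝ) ∂G.μ := by
  rw [← G.integral_degX_inter_edgeSet (hA.prod hB), ← integral_indicator hA]
  refine integral_congr_ae (.of_forall fun x => ?_)
  by_cases hx : x ∈ A <;> simp [hx, degX, edgeSet]

theorem map_swap_degMeasure : G.degMeasure.map Prod.swap = G.degMeasure := by
  refine Measure.ext_prod fun {A B} hA hB => ?_
  rw [Measure.map_apply measurable_swap (hA.prod hB), Set.preimage_swap_prod,
    ← measureReal_eq_measureReal_iff, G.degMeasure_real_prod hB hA, G.degMeasure_real_prod hA hB,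
    G.mp A B hA hB]

/-- The share of the edge `p = (x, y)` allotted to its endpoint `x` in the mass transport on a
finite forest: the proportion of the component of `x` lying in the branch at `x` through `y`. -/
noncomputable def branchRatio {V : Type*} (X : Set (V × V)) (p : V × V) : ℝ≥0∞ :=
  (branch X p.1 p.2).encard / (compo X p.1).encard

theorem toENNReal_encard_compo_ne_zero {V : Type*} (X : Set (V × V)) (x : V) :
    ((compo X x).encard : ℝ≥0∞) ≠ 0 := by
  simpa using Set.Nonempty.ne_empty ⟨x, mem_compo_self X x⟩

theorem inv_encard_compo_le_one {V : Type*} (X : Set (V × V)) (x : V) :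
    ((compo X x).encard : ℝ≥0∞)⁻¹ ≤ 1 := by
  rw [ENNReal.inv_le_one]
  exact_mod_cast Set.one_le_encard_iff_nonempty.2 ⟨x, mem_compo_self X x⟩

namespace IsForestSet

variable {V : Type*} {X : Set (V × V)} {x y : V}

theorem branchRatio_add_branchRatio_swap (hX : IsForestSet X)
    (hsymm : ∀ x y, (x, y) ∈ X → (y, x) ∈ X) (hxy : (x, y) ∈ X) (hfin : (compo X x).Finite) :
    branchRatio X (x, y) + branchRatio X (y, x) = 1 := by
  have hC : ((compo X x).encard : ℝ≥0∞) ≠ ⊤ := by simpa using hfin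
  rw [branchRatio, branchRatio, compo_eq_of_mem hsymm (.single hxy), ENNReal.div_add_div_same,
    ← ENat.toENNReal_add, hX.encard_branch_add_encard_branch hsymm hxy,
    ENNReal.div_self (toENNReal_encard_compo_ne_zero X x) hC]

theorem lintegral_branchRatio_add_inv [MeasurableSpace V] [MeasurableSingletonClass V]
    (hX : IsForestSet X) (hsymm : ∀ x y, (x, y) ∈ X → (y, x) ∈ X) (hfin : (compo X x).Finite) :
    ∫⁻ y in Prod.mk x ⁻¹' X, branchRatio X (x, y) ∂Measure.count +
      ((compo X x).encard : ℝ≥0∞)⁻¹ = 1 := by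
  have hC : ((compo X x).encard : ℝ≥0∞) ≠ ⊤ := by simpa using hfin
  have hN : (Prod.mk x ⁻¹' X).Finite := hfin.subset fun y hy => .single hy
  have hsum : ∫⁻ y in Prod.mk x ⁻¹' X, branchRatio X (x, y) ∂Measure.count =
      (∑ y ∈ hN.toFinset, (branch X x y).encard : ℕ∞) / ((compo X x).encard : ℝ≥0∞) := by
    have hset := lintegral_finset (μ := Measure.count) hN.toFinset fun y => branchRatio X (x, y)
    rw [hN.coe_toFinset] at hset
    rw [hset]
    rw [show ((∑ y ∈ hN.toFinset, (branch X x y).encard : ℕ∞) : ℝ≥0∞) =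
      ∑ y ∈ hN.toFinset, ((branch X x y).encard : ℝ≥0∞) from map_sum ENat.toENNRealRingHom _ _]
    simp [branchRatio, div_eq_mul_inv, Finset.sum_mul]
  rw [hsum, ← one_div, ENNReal.div_add_div_same, ← ENat.toENNReal_one, ← ENat.toENNReal_add,
    hX.sum_encard_branch_add_one hsymm hN,
    ENNReal.div_self (toENNReal_encard_compo_ne_zero X x) hC, ENat.toENNReal_one]

end IsForestSet

variable {J : Type*} [MeasurableSpace J] [StandardBorelSpace J] {G : Graphing J}
  {X F : Set (J × J)}

theorem IsEdgeSubset.measurable_toENNReal_encard_compo (hX : G.IsEdgeSubset X) :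
    Measurable fun x => ((compo X x).encard : ℝ≥0∞) :=
  Measurable.of_discrete.comp (measurable_encard_compo hX.hasBoundedSections)

theorem IsEdgeSubset.measurable_inv_encard_compo (hX : G.IsEdgeSubset X) :
    Measurable fun x => ((compo X x).encard : ℝ≥0∞)⁻¹ :=
  hX.measurable_toENNReal_encard_compo.inv

theorem IsEdgeSubset.measurable_branchRatio (hX : G.IsEdgeSubset X) :
    Measurable (branchRatio X) :=
  (Measurable.of_discrete.comp (measurable_encard_branch hX.hasBoundedSections)).div
    (hX.measurable_toENNReal_encard_compo.comp measurable_fst)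

theorem rho_eq_one_sub_toReal_lintegral (hX : G.IsEdgeSubset X) :
    G.rho X = 1 - (∫⁻ x, ((compo X x).encard : ℝ≥0∞)⁻¹ ∂G.μ).toReal := by
  rw [rho, ← integral_toReal hX.measurable_inv_encard_compo.aemeasurable]
  · simp_rw [ENNReal.toReal_inv, toReal_toENNReal_encard, one_div, Nat.card_coe_set_eq]
  · exact .of_forall fun x =>
      ENNReal.inv_lt_top.2 (toENNReal_encard_compo_ne_zero X x).bot_lt

theorem setLIntegral_degMeasure_comp_swap (hX : MeasurableSet X)
    (hsymm : ∀ x y, (x, y) ∈ X → (y, x) ∈ X) {f : J × J → ℝ≥0∞} (hf : Measurable f) :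
    ∫⁻ p in X, f p.swap ∂G.degMeasure = ∫⁻ p in X, f p ∂G.degMeasure := by
  have hswap : Prod.swap ⁻¹' X = X := Set.ext fun p => ⟨hsymm _ _, hsymm _ _⟩
  have hmp : MeasurePreserving Prod.swap G.degMeasure G.degMeasure :=
    ⟨measurable_swap, G.map_swap_degMeasure⟩
  conv_lhs => rw [← hswap]
  exact hmp.setLIntegral_comp_preimage hX hf

/- The identity `½ ∫ deg_F dμ = ρ(F)`, arranged so that no subtraction occurs in `ℝ≥0∞`. -/
theorem degMeasure_add_two_mul_lintegral_inv_of_finite (hF : G.IsEdgeSubset F)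
    (hforest : IsForestSet F) (hfin : ∀ x, (compo F x).Finite) :
    G.degMeasure F + 2 * ∫⁻ x, ((compo F x).encard : ℝ≥0∞)⁻¹ ∂G.μ = 2 := by
  have hmeas := hF.measurable_branchRatio
  have hshare : G.degMeasure F = 2 * ∫⁻ p in F, branchRatio F p ∂G.degMeasure := calc
    G.degMeasure F = ∫⁻ p in F, branchRatio F p + branchRatio F p.swap ∂G.degMeasure := by
      rw [← setLIntegral_one]
      exact setLIntegral_congr_fun hF.1 fun p hp =>
        (hforest.branchRatio_add_branchRatio_swap hF.2.1 hp (hfin p.1)).symm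
    _ = 2 * ∫⁻ p in F, branchRatio F p ∂G.degMeasure := by
      rw [lintegral_add_left hmeas, setLIntegral_degMeasure_comp_swap hF.1 hF.2.1 hmeas, two_mul]
  rw [hshare, G.setLIntegral_degMeasure hF.1 hmeas, Set.inter_eq_left.2 hF.2.2, ← mul_add,
    ← lintegral_add_right _ hF.measurable_inv_encard_compo]
  simp_rw [hforest.lintegral_branchRatio_add_inv hF.2.1 (hfin _)]
  simp

end Graphing

/-! ### Hyperfinite forests -/

namespace Graphing

theorem tendsto_encard_compo_sdiff {ι V : Type*} {l : Filter ι} {X : Set (V × V)}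
    {Z : ι → Set (V × V)} {x : V}
    (hZ : ∀ y ∈ compo X x, ∀ z, (y, z) ∈ X → ∀ᶠ i in l, (y, z) ∉ Z i) :
    Tendsto (fun i => (compo (X \ Z i) x).encard) l (𝓝 (compo X x).encard) := by
  refine tendsto_encard_of_eventually_mem (fun i => compo_mono Set.sdiff_subset x)
    fun y hy => ?_
  induction hy with
  | refl => exact .of_forall fun i => .refl
  | @tail y z hy hyz ih =>
    filter_upwards [ih, hZ y hy z hyz] with i hi hyzi
    exact hi.tail ⟨hyz, hyzi⟩

variable {J : Type*} [MeasurableSpace J] [StandardBorelSpace J] (G : Graphing J)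

theorem quasiMeasurePreserving_fst_degMeasure :
    Measure.QuasiMeasurePreserving Prod.fst G.degMeasure G.μ := by
  refine ⟨measurable_fst, .mk fun N hN hN0 => ?_⟩
  rw [Measure.map_apply measurable_fst hN, ← Set.prod_univ, degMeasure,
    Measure.compProd_apply_prod hN .univ, setLIntegral_measure_zero _ _ hN0]

theorem quasiMeasurePreserving_snd_degMeasure :
    Measure.QuasiMeasurePreserving Prod.snd G.degMeasure G.μ :=
  G.quasiMeasurePreserving_fst_degMeasure.comp
    (MeasurePreserving.quasiMeasurePreserving ⟨measurable_swap, G.map_swap_degMeasure⟩)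

variable {G}

theorem ae_forall_edge_of_ae_degMeasure {P : J × J → Prop} (hP : ∀ᵐ p ∂G.degMeasure, P p) :
    ∀ᵐ x ∂G.μ, ∀ y, G.E x y → P (x, y) := by
  filter_upwards [Measure.ae_ae_of_ae_compProd hP] with x hx
  rw [HasBoundedSections.kernel_apply,
    ae_restrict_iff' (measurable_prodMk_left G.measurableSet_edgeSet), Measure.ae_count_iff] at hx
  exact hx

theorem ae_forall_mem_compo {P : J → Prop} (hP : ∀ᵐ x ∂G.μ, P x) :
    ∀ᵐ x ∂G.μ, ∀ y ∈ compo G.edgeSet x, P y := by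
  have hreach (n : ℕ) : ∀ {P : J → Prop}, (∀ᵐ x ∂G.μ, P x) →
      ∀ᵐ x ∂G.μ, ∀ y, (x, y) ∈ reach G.edgeSet n → P y := by
    induction n with
    | zero => exact fun hP => hP.mono fun x hx y hxy => (show x = y from hxy) ▸ hx
    | succ n ih =>
      intro P hP
      have hnhd := ae_forall_edge_of_ae_degMeasure (G.quasiMeasurePreserving_snd_degMeasure.ae hP)
      filter_upwards [ih hP, ih hnhd] with x hx hxnhd y hxy
      rcases hxy with hxy | ⟨z, hxz, hzy⟩
      · exact hx y hxy
      · exact hxnhd z hxz y hzy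
  filter_upwards [ae_all_iff.2 fun n => hreach n hP] with x hx y hy
  rw [compo_eq_iUnion_reach, Set.mem_iUnion] at hy
  obtain ⟨n, hn⟩ := hy
  exact hx n y hn

variable (G) in
/-- Hyperfiniteness of the subgraphing with edge set `F`, whose edge measure is measured inside
`G`; this differs from its own edge measure by a constant factor. -/
def IsHyperfiniteSet (F : Set (J × J)) : Prop :=
  ∀ ε : ℝ, 0 < ε → ∃ X : Set (J × J), G.IsEdgeSubset X ∧ X ⊆ F ∧ G.eta X < ε ∧
    ∀ x : J, (compo (F \ X) x).Finite

variable {X Y F : Set (J × J)}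

theorem degMeasure_real_eq_eta_mul_avgDeg (hX : G.IsEdgeSubset X) :
    G.degMeasure.real X = G.eta X * G.avgDeg := by
  have hle : G.degMeasure.real X ≤ G.avgDeg := G.avgDeg_eq_degMeasure_real ▸ measureReal_mono hX.2.2
  rw [eta, G.integral_degX hX.1 hX.2.2, div_mul_cancel_of_imp fun h =>
    (h ▸ hle).antisymm measureReal_nonneg]

theorem eta_mono (hX : G.IsEdgeSubset X) (hY : G.IsEdgeSubset Y) (hXY : X ⊆ Y) :
    G.eta X ≤ G.eta Y := by
  rw [eta, eta, G.integral_degX hX.1 hX.2.2, G.integral_degX hY.1 hY.2.2, avgDeg_eq_degMeasure_real]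
  exact div_le_div_of_nonneg_right (measureReal_mono hXY) measureReal_nonneg

theorem IsHyperfiniteSet.mono (hF : G.IsHyperfiniteSet F) (hX : G.IsEdgeSubset X)
    (hXF : X ⊆ F) : G.IsHyperfiniteSet X := by
  intro ε hε
  obtain ⟨Z, hZ, -, hZε, hfin⟩ := hF ε hε
  refine ⟨X ∩ Z, hX.inter hZ, Set.inter_subset_left,
    (eta_mono (hX.inter hZ) hZ Set.inter_subset_right).trans_lt hZε, fun x => ?_⟩
  rw [Set.sdiff_self_inter]
  exact (hfin x).subset (compo_mono (Set.sdiff_subset_sdiff_left hXF) x)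

theorem IsHyperfiniteSet.exists_degMeasure_le (hF : G.IsHyperfiniteSet F) {ε : ℝ≥0∞}
    (hε : ε ≠ 0) : ∃ Z, G.IsEdgeSubset Z ∧ Z ⊆ F ∧ G.degMeasure Z ≤ ε ∧
      ∀ x, (compo (F \ Z) x).Finite := by
  obtain ⟨δ, hδpos, hδε⟩ := ENNReal.lt_iff_exists_nnreal_btwn.1 hε.bot_lt
  have hδ : (0 : ℝ) < δ := by simpa using hδpos
  have hD : 0 < G.avgDeg + 1 := G.avgDeg_eq_degMeasure_real ▸ by positivity
  obtain ⟨Z, hZ, hZF, hZε, hfin⟩ := hF (δ / (G.avgDeg + 1)) (div_pos hδ hD)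
  refine ⟨Z, hZ, hZF, le_trans ?_ hδε.le, hfin⟩
  rw [← ofReal_measureReal, ← ENNReal.ofReal_coe_nnreal, degMeasure_real_eq_eta_mul_avgDeg hZ]
  refine ENNReal.ofReal_le_ofReal ?_
  rw [lt_div_iff₀ hD] at hZε
  exact (mul_le_mul_of_nonneg_left (by linarith) (G.eta_nonneg Z)).trans hZε.le

theorem IsHyperfiniteSet.exists_seq_tsum_degMeasure_ne_top (hF : G.IsHyperfiniteSet F) :
    ∃ Z : ℕ → Set (J × J), (∀ n, G.IsEdgeSubset (Z n) ∧ Z n ⊆ F ∧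
      ∀ x, (compo (F \ Z n) x).Finite) ∧ ∑' n, G.degMeasure (Z n) ≠ ⊤ := by
  obtain ⟨ε, hε, hsum⟩ := ENNReal.exists_pos_sum_of_countable one_ne_zero ℕ
  choose Z hZ hZF hZε hfin using
    fun n => hF.exists_degMeasure_le (ENNReal.coe_ne_zero.2 (hε n).ne')
  exact ⟨Z, fun n => ⟨hZ n, hZF n, hfin n⟩,
    ne_top_of_le_ne_top hsum.ne_top (ENNReal.tsum_le_tsum hZε)⟩

theorem ae_tendsto_encard_compo_sdiff (hX : X ⊆ G.edgeSet) {Z : ℕ → Set (J × J)}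
    (hZ : ∑' n, G.degMeasure (Z n) ≠ ⊤) : ∀ᵐ x ∂G.μ,
      Tendsto (fun n => (compo (X \ Z n) x).encard) atTop (𝓝 (compo X x).encard) := by
  have hedge := ae_forall_edge_of_ae_degMeasure (ae_eventually_notMem hZ)
  filter_upwards [ae_forall_mem_compo hedge] with x hx
  exact tendsto_encard_compo_sdiff fun y hy z hyz => hx y (compo_mono hX x hy) z (hX hyz)

theorem tendsto_lintegral_inv_encard_compo_sdiff (hX : G.IsEdgeSubset X) {Z : ℕ → Set (J × J)}
    (hZ : ∀ n, G.IsEdgeSubset (Z n)) (hsum : ∑' n, G.degMeasure (Z n) ≠ ⊤) :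
    Tendsto (fun n => ∫⁻ x, ((compo (X \ Z n) x).encard : ℝ≥0∞)⁻¹ ∂G.μ) atTop
      (𝓝 (∫⁻ x, ((compo X x).encard : ℝ≥0∞)⁻¹ ∂G.μ)) := by
  refine tendsto_lintegral_of_dominated_convergence 1
    (fun n => (hX.sdiff (hZ n)).measurable_inv_encard_compo) (fun n => .of_forall fun x => ?_)
    (by simp) ?_
  · exact inv_encard_compo_le_one _ x
  · filter_upwards [ae_tendsto_encard_compo_sdiff hX.2.2 hsum] with x hx
    exact tendsto_inv_iff.2 ((ENat.continuous_toENNReal.tendsto _).comp hx)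

theorem IsHyperfiniteSet.degMeasure_add_two_mul_lintegral_inv (hhyp : G.IsHyperfiniteSet F)
    (hF : G.IsEdgeSubset F) (hforest : IsForestSet F) :
    G.degMeasure F + 2 * ∫⁻ x, ((compo F x).encard : ℝ≥0∞)⁻¹ ∂G.μ = 2 := by
  obtain ⟨Z, hZ, hsum⟩ := hhyp.exists_seq_tsum_degMeasure_ne_top
  have hdeg := tendsto_measure_sdiff_of_tsum_ne_top (fun n => (hZ n).1.1) (fun n => (hZ n).2.1) hsum
  have hinv := tendsto_lintegral_inv_encard_compo_sdiff hF (fun n => (hZ n).1) hsum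
  refine tendsto_nhds_unique (hdeg.add (ENNReal.Tendsto.const_mul hinv (.inr (by simp)))) ?_
  simp_rw [fun n => degMeasure_add_two_mul_lintegral_inv_of_finite (hF.sdiff (hZ n).1)
    (hforest.mono Set.sdiff_subset) (hZ n).2.2]
  exact tendsto_const_nhds

theorem IsHyperfiniteSet.half_integral_degX_eq_rho (hhyp : G.IsHyperfiniteSet F)
    (hF : G.IsEdgeSubset F) (hforest : IsForestSet F) :
    (1 / 2) * ∫ x, (degX F x : ℝ) ∂G.μ = G.rho F := by
  have heq := hhyp.degMeasure_add_two_mul_lintegral_inv hF hforest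
  have htop : 2 * ∫⁻ x, ((compo F x).encard : ℝ≥0∞)⁻¹ ∂G.μ ≠ ⊤ :=
    ne_top_of_le_ne_top ENNReal.ofNat_ne_top (le_of_le_of_eq le_add_self heq)
  have hreal := congrArg ENNReal.toReal heq
  rw [ENNReal.toReal_add (measure_ne_top _ _) htop, ENNReal.toReal_mul,
    ENNReal.toReal_ofNat] at hreal
  rw [G.integral_degX hF.1 hF.2.2, rho_eq_one_sub_toReal_lintegral hF, Measure.real]
  linarith

theorem rho_mono (hX : G.IsEdgeSubset X) (hY : G.IsEdgeSubset Y) (hXY : X ⊆ Y) :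
    G.rho X ≤ G.rho Y := by
  rw [rho_eq_one_sub_toReal_lintegral hX, rho_eq_one_sub_toReal_lintegral hY]
  refine sub_le_sub_left (ENNReal.toReal_mono ?_ (lintegral_mono fun x => ?_)) 1
  · refine ne_top_of_le_ne_top (measure_ne_top G.μ .univ) ?_
    exact (lintegral_mono fun x => inv_encard_compo_le_one X x).trans_eq lintegral_one
  · exact ENNReal.inv_le_inv.2 (ENat.toENNReal_le.2 (Set.encard_le_encard (compo_mono hXY x)))

theorem half_integral_degX_iUnion {f : ℕ → Set (J × J)} (hf : ∀ n, G.IsEdgeSubset (f n))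
    (hdisj : Pairwise (Function.onFun Disjoint f)) :
    (1 / 2) * ∫ x, (degX (⋃ n, f n) x : ℝ) ∂G.μ =
      ∑' n, (1 / 2) * ∫ x, (degX (f n) x : ℝ) ∂G.μ := by
  rw [tsum_mul_left, G.integral_degX (.iUnion fun n => (hf n).1)
    (Set.iUnion_subset fun n => (hf n).2.2)]
  simp_rw [fun n => G.integral_degX (hf n).1 (hf n).2.2, Measure.real]
  rw [measure_iUnion hdisj fun n => (hf n).1, ENNReal.tsum_toReal_eq fun n => measure_ne_top _ _]

end Graphing

/-- Let `G` be a graphing and `F` a hyperfinite spanning subforest of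
`G` (Borel, every component a tree, same connected components as `G`, hyperfinite as a
subgraphing). Then `α(X) = (d̄_H/2)·η_H(X∩F) = (1/2)∫ deg_{X∩F} dμ` defines a countably
additive measure on Borel subsets of `E` with `α ≤ ρ` and `α(E) = ρ(E)`. -/
theorem Graphing.spanning_forest_minorizing_measure {J : Type*} [MeasurableSpace J]
    [StandardBorelSpace J] (G : Graphing J) (F : Set (J × J))
    (hF : G.IsEdgeSubset F) (hforest : Graphing.IsForestSet F)
    (hspan : ∀ x : J, Graphing.compo F x = Graphing.compo G.edgeSet x)
    (hhyp : ∀ ε : ℝ, 0 < ε → ∃ X : Set (J × J), G.IsEdgeSubset X ∧ X ⊆ F ∧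
      G.eta X < ε ∧ ∀ x : J, (Graphing.compo (F \ X) x).Finite) :
    (∀ X : Set (J × J), G.IsEdgeSubset X →
        (1/2) * ∫ x, (Graphing.degX (X ∩ F) x : ℝ) ∂G.μ ≤ G.rho X) ∧
    ((1/2) * ∫ x, (Graphing.degX (G.edgeSet ∩ F) x : ℝ) ∂G.μ = G.rho G.edgeSet) ∧
    (∀ f : ℕ → Set (J × J), (∀ n, G.IsEdgeSubset (f n)) →
        Pairwise (Function.onFun Disjoint f) →
        (1/2) * ∫ x, (Graphing.degX ((⋃ n, f n) ∩ F) x : ℝ) ∂G.μ =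
          ∑' n, (1/2) * ∫ x, (Graphing.degX (f n ∩ F) x : ℝ) ∂G.μ) := by
  have hhyp : G.IsHyperfiniteSet F := hhyp
  refine ⟨fun X hX => ?_, ?_, fun f hf hdisj => ?_⟩
  · have hXF := hX.inter hF
    calc (1 / 2) * ∫ x, (degX (X ∩ F) x : ℝ) ∂G.μ = G.rho (X ∩ F) :=
          (hhyp.mono hXF Set.inter_subset_right).half_integral_degX_eq_rho hXF
            (hforest.mono Set.inter_subset_right)
      _ ≤ G.rho X := rho_mono hXF hX Set.inter_subset_left
  · rw [Set.inter_eq_right.2 hF.2.2, hhyp.half_integral_degX_eq_rho hF hforest]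
    simp only [rho, hspan]
  · rw [Set.iUnion_inter]
    exact half_integral_degX_iUnion (fun n => (hf n).inter hF) fun m n hmn =>
      (hdisj hmn).mono Set.inter_subset_left Set.inter_subset_left
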